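/- For every i ∈ V and every subset U ⊆ V \ {i}, the sum, over all linear orderings ≺ of V in which the set of predecessors of i is exactly U, of Π_{l ∈ V} α_l(U_l^≺), equals α_i(U) · L(U) · R(V \ (U ∪ {i})). -/

import Mathlib

/-- The finite set of elements of the list `l` strictly preceding the element `i`
(the prefix of `l` before the first occurrence of `i`). -/
def predSet {ι : Type*} [DecidableEq ι] (l : List ι) (i : ι) : Finset ι :=
  (l.takeWhile (fun a => decide (a ≠ i))).toFinset

/-- All linear orderings of the finite set `S`, i.e. all lists enumerating the
elements of `S` without repetition. -/
noncomputable def orderings {ι : Type*} [DecidableEq ι] (S : Finset ι) : Finset (List ι) :=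
  S.toList.permutations.toFinset

/-- `L(S)`: the sum over all linear orderings `(σ₁, …, σ_k)` of `S` of
`∏_{j=1}^{k} α_{σ_j}({σ₁, …, σ_{j−1}})`, with `L(∅) = 1`. -/
noncomputable def Lfun {ι : Type*} [DecidableEq ι] (α : ι → Finset ι → ℝ) (S : Finset ι) : ℝ :=
  ∑ l ∈ orderings S, ∏ i ∈ S, α i (predSet l i)

/-- `R(T)`: the sum over all linear orderings `(τ₁, …, τ_m)` of `T` of
`∏_{j=1}^{m} α_{τ_j}((V \ T) ∪ {τ₁, …, τ_{j−1}})`, with `R(∅) = 1`. -/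
noncomputable def Rfun {ι : Type*} [DecidableEq ι] (α : ι → Finset ι → ℝ)
    (V T : Finset ι) : ℝ :=
  ∑ l ∈ orderings T, ∏ j ∈ T, α j ((V \ T) ∪ predSet l j)

theorem mem_orderings_iff {ι : Type*} [DecidableEq ι] (S : Finset ι) (l : List ι) :
    l ∈ orderings S ↔ l.Nodup ∧ l.toFinset = S := by
  unfold orderings
  rw [List.mem_toFinset, List.mem_permutations]
  constructor
  · intro h
    refine ⟨h.nodup_iff.mpr S.nodup_toList, ?_⟩
    rw [List.toFinset_eq_of_perm _ _ h, Finset.toList_toFinset]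
  · rintro ⟨h, rfl⟩
    exact (List.toFinset_toList h).symm

theorem predSet_cons {ι : Type*} [DecidableEq ι] (x : ι) (l : List ι) (j : ι) :
    predSet (x :: l) j = if x = j then ∅ else insert x (predSet l j) := by
  unfold predSet
  by_cases h : x = j <;> simp [List.takeWhile_cons, h]

theorem predSet_append {ι : Type*} [DecidableEq ι] (a b : List ι) (j : ι) :
    predSet (a ++ b) j = if j ∈ a then predSet a j else a.toFinset ∪ predSet b j := by
  induction a with
  | nil => simp
  | cons x a ih =>
    rw [List.cons_append, predSet_cons, predSet_cons, ih]
    by_cases h : x = j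
    · simp [h]
    · have h' : j ≠ x := fun e => h e.symm
      by_cases h2 : j ∈ a <;> simp [h, h', h2]

/-- For every `i ∈ V` and every subset `U ⊆ V \ {i}`, the sum, over all linear
orderings `≺` of `V` in which the set of predecessors of `i` is exactly `U`, of
`Π_{l ∈ V} α_l(U_l^≺)`, equals `α_i(U) · L(U) · R(V \ (U ∪ {i}))`. -/
theorem sum_over_orderings_with_fixed_predecessors
    {ι : Type*} [DecidableEq ι] (α : ι → Finset ι → ℝ)
    (V : Finset ι) (i : ι) (hi : i ∈ V) (U : Finset ι) (hU : U ⊆ V.erase i) :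
    ∑ l ∈ (orderings V).filter (fun l => predSet l i = U), ∏ j ∈ V, α j (predSet l j)
      = α i U * Lfun α U * Rfun α V (V \ insert i U) := by
  have hiU : i ∉ U := fun h => by simpa using hU h
  have hUV : U ⊆ V := fun x hx => Finset.mem_of_mem_erase (hU hx)
  have hins : insert i U ⊆ V := Finset.insert_subset hi hUV
  unfold Lfun Rfun
  rw [Finset.sdiff_sdiff_eq_self hins, mul_assoc, Finset.sum_mul_sum, ← Finset.sum_product',
    Finset.mul_sum]
  symm
  refine Finset.sum_bij (fun p _ => p.1 ++ i :: p.2) ?_ ?_ ?_ ?_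
  · rintro ⟨a, b⟩ h
    simp only [Finset.mem_product, mem_orderings_iff] at h
    obtain ⟨⟨ha, rfl⟩, hb, hb'⟩ := h
    have hbm : ∀ x, x ∈ b ↔ x ∈ V ∧ x ≠ i ∧ x ∉ a := by
      intro x
      rw [← List.mem_toFinset, hb']
      simp
    have hia : i ∉ a := by simpa using hiU
    rw [Finset.mem_filter, mem_orderings_iff]
    refine ⟨⟨?_, ?_⟩, ?_⟩
    · rw [List.nodup_append, List.nodup_cons]
      refine ⟨ha, ⟨fun h => ((hbm i).1 h).2.1 rfl, hb⟩, ?_⟩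
      rintro x hx y hy rfl
      rcases List.mem_cons.1 hy with rfl | hy
      · exact hia hx
      · exact ((hbm x).1 hy).2.2 hx
    · ext x
      have h1 : x ∈ a → x ∈ V := fun h => hUV (by simpa using h)
      simp only [List.mem_toFinset, List.mem_append, List.mem_cons, hbm]
      constructor
      · rintro (h | rfl | h)
        · exact h1 h
        · exact hi
        · exact h.1
      · intro h
        tauto
    · simp [predSet_append, hia, predSet_cons]
  · rintro ⟨a, b⟩ h ⟨c, d⟩ h' e
    simp only [Finset.mem_product, mem_orderings_iff] at h h'
    have hl : a.length = c.length := by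
      rw [← List.toFinset_card_of_nodup h.1.1, ← List.toFinset_card_of_nodup h'.1.1,
        h.1.2, h'.1.2]
    have := List.append_inj e hl
    simp_all
  · intro l h
    rw [Finset.mem_filter, mem_orderings_iff] at h
    obtain ⟨⟨hn, hV⟩, hp⟩ := h
    have hil : i ∈ l := by rw [← List.mem_toFinset, hV]; exact hi
    obtain ⟨a, b, rfl⟩ := List.append_of_mem hil
    rw [List.nodup_append, List.nodup_cons] at hn
    obtain ⟨ha, ⟨hib, hb⟩, hd⟩ := hn
    have hia : i ∉ a := fun h => hd i h i (by simp) rfl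
    have haU : a.toFinset = U := by
      rw [← hp]; simp [predSet_append, hia, predSet_cons]
    refine ⟨(a, b), ?_, rfl⟩
    simp only [Finset.mem_product, mem_orderings_iff]
    refine ⟨⟨ha, haU⟩, hb, ?_⟩
    ext x
    rw [← hV, ← haU]
    simp only [List.mem_toFinset, Finset.mem_sdiff, Finset.mem_insert, List.mem_append,
      List.mem_cons]
    constructor
    · intro h
      refine ⟨Or.inr (Or.inr h), ?_⟩
      rintro (rfl | h2)
      · exact hib h
      · exact hd x h2 x (by simp [h]) rfl
    · tauto
  · rintro ⟨a, b⟩ h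
    simp only [Finset.mem_product, mem_orderings_iff] at h
    obtain ⟨⟨ha, haU⟩, hb, hb'⟩ := h
    have hia : i ∉ a := by rw [← List.mem_toFinset, haU]; exact hiU
    rw [← Finset.prod_sdiff hins, Finset.prod_insert hiU, mul_comm (∏ j ∈ V \ insert i U, _),
      mul_assoc]
    simp only
    congr 1
    · simp [predSet_append, hia, predSet_cons, haU]
    congr 1
    · refine Finset.prod_congr rfl fun j hj => ?_
      have : j ∈ a := by rw [← List.mem_toFinset, haU]; exact hj
      simp [predSet_append, this]
    · refine Finset.prod_congr rfl fun j hj => ?_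
      simp only [Finset.mem_sdiff, Finset.mem_insert, not_or] at hj
      have h1 : j ∉ a := by rw [← List.mem_toFinset, haU]; exact hj.2.2
      have h2 : i ≠ j := fun e => hj.2.1 e.symm
      simp [predSet_append, h1, predSet_cons, h2, haU]
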